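/- Let q ∈ ℝ with |q| > 1, n ≥ 1, and let H = ℓ²(ℕⁿ). Let F be the free unital complex *-algebra on generators x₀, x₁, …, x_n with x₀ self-adjoint, and let Ψ₊, Ψ₋ : F → B(H) be the unital *-homomorphisms determined by sending the generators to the operators of the representations ψ^{(2n)}_+ and ψ^{(2n)}_− respectively, i.e. Ψ±(x₀) e_k = ± q^{−(k₀+⋯+k_{n−1})} e_k and Ψ±(x_i) e_k = (1 − q^{−2k_{i−1}})^{1/2} q^{−(k_i+⋯+k_{n−1})} e_{k−δ_{i−1}} for i = 1, …, n. Then for every element w ∈ F, the difference Ψ₊(w) − Ψ₋(w) is a trace-class operator on H. (Consequently the pair (ψ^{(2n)}_+, ψ^{(2n)}_−) with F = [[0,1],[1,0]] defines a 1-summable even Fredholm module over A(S^{2n}_q).) -/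

import Mathlib

/-- The standard orthonormal basis vector of `ℓ²(ℕⁿ)` at `k`. -/
noncomputable def eVec (n : ℕ) (k : Fin n → ℕ) : lp (fun _ : Fin n → ℕ => ℂ) 2 :=
  lp.single 2 k 1

/-- A bounded operator on `ℓ²(ℕⁿ)` is Hilbert–Schmidt if the squared norms of the images
of the standard basis vectors are summable. -/
def IsHilbertSchmidt {n : ℕ}
    (T : lp (fun _ : Fin n → ℕ => ℂ) 2 →L[ℂ] lp (fun _ : Fin n → ℕ => ℂ) 2) : Prop :=
  Summable fun k : Fin n → ℕ => ‖T (eVec n k)‖ ^ 2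

/-- A bounded operator is trace class iff it is a product of two Hilbert–Schmidt
operators. -/
def IsTraceClass {n : ℕ}
    (T : lp (fun _ : Fin n → ℕ => ℂ) 2 →L[ℂ] lp (fun _ : Fin n → ℕ => ℂ) 2) : Prop :=
  ∃ A B, IsHilbertSchmidt A ∧ IsHilbertSchmidt B ∧ T = A * B

/-!
The trace-class operators form a two-sided `*`-ideal of `B(H)`, so the pairs `(a, b)` with `a - b`
trace class form a `*`-subalgebra of `B(H) × B(H)`, and the difference needs to be controlled on
generators only. There `ψ₊(xᵢ) = ψ₋(xᵢ)` for `i ≥ 1`, while `ψ₊(x₀) - ψ₋(x₀)` is diagonal with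
entries `2 q ^ (-|k|)`, which are absolutely summable over `ℕⁿ` as a product of geometric series.
-/

/-- The Hilbert space `ℓ²(ℕⁿ)` on which the representations act. -/
abbrev EllTwo (n : ℕ) : Type := lp (fun _ : Fin n → ℕ => ℂ) 2

section HilbertBasis

variable {ι κ 𝕜 E F : Type*} [RCLike 𝕜] [NormedAddCommGroup E] [InnerProductSpace 𝕜 E]
  [NormedAddCommGroup F] [InnerProductSpace 𝕜 F]

theorem hasSum_sq_norm_inner_hilbertBasis (b : HilbertBasis ι 𝕜 E) (x : E) :
    HasSum (fun i => ‖inner 𝕜 (b i) x‖ ^ 2) (‖x‖ ^ 2) := by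
  simpa [b.repr_apply_apply] using lp.hasSum_norm (p := 2) (by norm_num) (b.repr x)

theorem ext_inner_hilbertBasis (b : HilbertBasis ι 𝕜 E) (c : HilbertBasis κ 𝕜 F)
    {S T : E →L[𝕜] F} (h : ∀ i j, inner 𝕜 (c j) (S (b i)) = inner 𝕜 (c j) (T (b i))) :
    S = T := by
  refine ContinuousLinearMap.ext_on
    (Submodule.dense_iff_topologicalClosure_eq_top.2 b.dense_span) ?_
  rintro _ ⟨i, rfl⟩
  refine c.repr.injective (lp.ext (funext fun j => ?_))
  simpa only [c.repr_apply_apply] using h i j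

theorem summable_sq_norm_adjoint_hilbertBasis [CompleteSpace E] [CompleteSpace F]
    (b : HilbertBasis ι 𝕜 E) (c : HilbertBasis κ 𝕜 F) {T : E →L[𝕜] F}
    (hT : Summable fun i => ‖T (b i)‖ ^ 2) :
    Summable fun j => ‖ContinuousLinearMap.adjoint T (c j)‖ ^ 2 := by
  have row (i : ι) := hasSum_sq_norm_inner_hilbertBasis c (T (b i))
  have column (j : κ) : HasSum (fun i => ‖inner 𝕜 (c j) (T (b i))‖ ^ 2)
      (‖ContinuousLinearMap.adjoint T (c j)‖ ^ 2) := by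
    simpa only [ContinuousLinearMap.adjoint_inner_right, norm_inner_symm (T _)] using
      hasSum_sq_norm_inner_hilbertBasis b (ContinuousLinearMap.adjoint T (c j))
  have entries : Summable fun p : ι × κ => ‖inner 𝕜 (c p.2) (T (b p.1))‖ ^ 2 :=
    (summable_prod_of_nonneg fun _ => by positivity).2
      ⟨fun i => (row i).summable, by simpa only [(row _).tsum_eq] using hT⟩
  simpa only [Prod.swap, (column _).tsum_eq] using entries.prod_symm.prod

theorem exists_continuousLinearMap_hilbertBasis_eq [CompleteSpace F] (b : HilbertBasis ι 𝕜 E)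
    {v : ι → F} (hv : Orthonormal 𝕜 v) : ∃ V : E →L[𝕜] F, ∀ i, V (b i) = v i := by
  classical
  refine ⟨(hv.orthogonalFamily.linearIsometry.comp
    b.repr.toLinearIsometry).toContinuousLinearMap, fun i => ?_⟩
  simp [b.repr_self, hv.orthogonalFamily.linearIsometry_apply_single]

theorem exists_isometries_orthogonal_ranges [Infinite ι] [CompleteSpace E]
    (b : HilbertBasis ι 𝕜 E) :
    ∃ V W : E →L[𝕜] E, star V * V = 1 ∧ star W * W = 1 ∧ star V * W = 0 := by
  classical
  obtain ⟨e⟩ : Nonempty (ι ⊕ ι ≃ ι) := Cardinal.eq.1 (by simp)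
  obtain ⟨V, hV⟩ := exists_continuousLinearMap_hilbertBasis_eq b
    (b.orthonormal.comp _ (e.injective.comp Sum.inl_injective))
  obtain ⟨W, hW⟩ := exists_continuousLinearMap_hilbertBasis_eq b
    (b.orthonormal.comp _ (e.injective.comp Sum.inr_injective))
  have inner_b := orthonormal_iff_ite.1 b.orthonormal
  refine ⟨V, W, ?_, ?_, ?_⟩ <;> refine ext_inner_hilbertBasis b b fun i j => ?_ <;>
    simp [ContinuousLinearMap.star_eq_adjoint, ContinuousLinearMap.adjoint_inner_right, hV, hW,
      inner_b]

end HilbertBasis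

/-- The basis `eVec n` of `ℓ²(ℕⁿ)` as a `HilbertBasis`, giving access to Parseval's identity and
matrix coefficients. -/
noncomputable def eVecBasis (n : ℕ) : HilbertBasis (Fin n → ℕ) ℂ (EllTwo n) :=
  HilbertBasis.ofRepr (LinearIsometryEquiv.refl ℂ (EllTwo n))

theorem eVecBasis_apply (n : ℕ) (k : Fin n → ℕ) : eVecBasis n k = eVec n k := by
  rw [← (eVecBasis n).repr_symm_single k]
  rfl

theorem norm_eVec (n : ℕ) (k : Fin n → ℕ) : ‖eVec n k‖ = 1 := by
  simp [eVec, lp.norm_single]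

theorem ext_eVec {n : ℕ} {S T : EllTwo n →L[ℂ] EllTwo n}
    (h : ∀ k, S (eVec n k) = T (eVec n k)) : S = T :=
  ext_inner_hilbertBasis (eVecBasis n) (eVecBasis n) fun k l => by
    rw [eVecBasis_apply n k, h]

namespace IsHilbertSchmidt

variable {n : ℕ} {S T : EllTwo n →L[ℂ] EllTwo n}

protected theorem zero : IsHilbertSchmidt (0 : EllTwo n →L[ℂ] EllTwo n) := by
  simp [IsHilbertSchmidt, summable_zero]

protected theorem star (hT : IsHilbertSchmidt T) : IsHilbertSchmidt (star T) := by
  unfold IsHilbertSchmidt at hT ⊢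
  simp only [← eVecBasis_apply] at hT ⊢
  exact summable_sq_norm_adjoint_hilbertBasis (eVecBasis n) (eVecBasis n) hT

protected theorem mul_left (A : EllTwo n →L[ℂ] EllTwo n) (hT : IsHilbertSchmidt T) :
    IsHilbertSchmidt (A * T) := by
  refine .of_nonneg_of_le (fun _ => by positivity) (fun k => ?_) (Summable.mul_left (‖A‖ ^ 2) hT)
  rw [← mul_pow]
  gcongr
  exact A.le_opNorm _

protected theorem mul_right (A : EllTwo n →L[ℂ] EllTwo n) (hT : IsHilbertSchmidt T) :
    IsHilbertSchmidt (T * A) := by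
  simpa using (hT.star.mul_left (star A)).star

protected theorem add (hS : IsHilbertSchmidt S) (hT : IsHilbertSchmidt T) :
    IsHilbertSchmidt (S + T) := by
  refine .of_nonneg_of_le (fun _ => by positivity) (fun k => ?_)
    ((Summable.add hS hT).mul_left 2)
  calc ‖S (eVec n k) + T (eVec n k)‖ ^ 2
      ≤ (‖S (eVec n k)‖ + ‖T (eVec n k)‖) ^ 2 := by gcongr; exact norm_add_le _ _
    _ ≤ 2 * (‖S (eVec n k)‖ ^ 2 + ‖T (eVec n k)‖ ^ 2) := add_sq_le

end IsHilbertSchmidt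

namespace IsTraceClass

variable {n : ℕ} {S T : EllTwo n →L[ℂ] EllTwo n}

protected theorem zero : IsTraceClass (0 : EllTwo n →L[ℂ] EllTwo n) :=
  ⟨0, 0, .zero, .zero, (mul_zero 0).symm⟩

protected theorem mul_left (X : EllTwo n →L[ℂ] EllTwo n) (hT : IsTraceClass T) :
    IsTraceClass (X * T) := by
  obtain ⟨A, B, hA, hB, rfl⟩ := hT
  exact ⟨X * A, B, hA.mul_left X, hB, (mul_assoc X A B).symm⟩

protected theorem mul_right (X : EllTwo n →L[ℂ] EllTwo n) (hT : IsTraceClass T) :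
    IsTraceClass (T * X) := by
  obtain ⟨A, B, hA, hB, rfl⟩ := hT
  exact ⟨A, B * X, hA, hB.mul_right X, mul_assoc A B X⟩

protected theorem star (hT : IsTraceClass T) : IsTraceClass (star T) := by
  obtain ⟨A, B, hA, hB, rfl⟩ := hT
  exact ⟨_, _, hB.star, hA.star, star_mul A B⟩

protected theorem add (hS : IsTraceClass S) (hT : IsTraceClass T) : IsTraceClass (S + T) := by
  rcases isEmpty_or_nonempty (Fin n) with _ | _
  · exact ⟨S + T, 1, .of_finite, .of_finite, (mul_one _).symm⟩
  obtain ⟨A₁, B₁, hA₁, hB₁, rfl⟩ := hS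
  obtain ⟨A₂, B₂, hA₂, hB₂, rfl⟩ := hT
  -- Isometries with orthogonal ranges let `A₁V* + A₂W*` and `VB₁ + WB₂` multiply without cross
  -- terms.
  obtain ⟨V, W, hV, hW, hVW⟩ := exists_isometries_orthogonal_ranges (eVecBasis n)
  have hWV : star W * V = 0 := by simpa using congrArg star hVW
  refine ⟨A₁ * star V + A₂ * star W, V * B₁ + W * B₂,
    (hA₁.mul_right _).add (hA₂.mul_right _), (hB₁.mul_left V).add (hB₂.mul_left W), ?_⟩
  calc A₁ * B₁ + A₂ * B₂
      = A₁ * (star V * V) * B₁ + A₁ * (star V * W) * B₂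
        + (A₂ * (star W * V) * B₁ + A₂ * (star W * W) * B₂) := by
        simp only [hV, hW, hVW, hWV, mul_one, mul_zero, zero_mul, add_zero, zero_add]
    _ = (A₁ * star V + A₂ * star W) * (V * B₁ + W * B₂) := by noncomm_ring

end IsTraceClass

/-- The two-sided ideal of trace-class operators on `ℓ²(ℕⁿ)`, modulo which the two
representations agree. -/
noncomputable def traceClassIdeal (n : ℕ) : TwoSidedIdeal (EllTwo n →L[ℂ] EllTwo n) :=
  .mk' {T | IsTraceClass T}
    .zero .add (fun hT => by simpa using hT.mul_left (-1)) (.mul_left _) (.mul_right _)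

theorem mem_traceClassIdeal {n : ℕ} {T : EllTwo n →L[ℂ] EllTwo n} :
    T ∈ traceClassIdeal n ↔ IsTraceClass T :=
  TwoSidedIdeal.mem_mk' ..

theorem fst_sub_snd_mem_of_mem_starAdjoin {R A : Type*} [CommSemiring R] [StarRing R] [Ring A]
    [StarRing A] [Algebra R A] [StarModule R A] {I : TwoSidedIdeal A} (hI : ∀ a ∈ I, star a ∈ I)
    {s : Set (A × A)} (hs : ∀ p ∈ s, p.1 - p.2 ∈ I) {w : A × A}
    (hw : w ∈ StarAlgebra.adjoin R s) : w.1 - w.2 ∈ I := by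
  induction hw using StarAlgebra.adjoin_induction with
  | mem p hp => exact hs p hp
  | algebraMap r => simp [I.zero_mem]
  | add x y _ _ hx hy =>
    rw [← I.rel_iff] at hx hy ⊢
    exact I.ringCon.add hx hy
  | mul x y _ _ hx hy =>
    rw [← I.rel_iff] at hx hy ⊢
    exact I.ringCon.mul hx hy
  | star x _ hx => simpa using hI _ hx

theorem exists_isHilbertSchmidt_diagonal {n : ℕ} {d : (Fin n → ℕ) → ℂ}
    (hd : Summable fun k => ‖d k‖ ^ 2) :
    ∃ D : EllTwo n →L[ℂ] EllTwo n, IsHilbertSchmidt D ∧ ∀ k, D (eVec n k) = d k • eVec n k := by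
  have hbound (k : Fin n → ℕ) : ‖d k • ContinuousLinearMap.id ℂ ℂ‖ ≤ √(∑' l, ‖d l‖ ^ 2) := by
    rw [norm_smul, ContinuousLinearMap.norm_id, mul_one]
    exact Real.le_sqrt_of_sq_le (hd.le_tsum k fun _ _ => by positivity)
  have hD (k : Fin n → ℕ) :
      lp.mapCLM 2 (fun k => d k • ContinuousLinearMap.id ℂ ℂ) (Real.sqrt_nonneg _) hbound
        (eVec n k) = d k • eVec n k := by
    ext l
    rcases eq_or_ne l k with rfl | hlk
    · simp [eVec]
    · simp [eVec, hlk]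
  refine ⟨_, hd.congr fun k => ?_, hD⟩
  rw [hD, norm_smul, norm_eVec, mul_one]

theorem isTraceClass_of_summable_diagonal {n : ℕ} {T : EllTwo n →L[ℂ] EllTwo n}
    {d : (Fin n → ℕ) → ℂ} (hd : Summable fun k => ‖d k‖)
    (hT : ∀ k, T (eVec n k) = d k • eVec n k) : IsTraceClass T := by
  -- `d = (d / s) * s` has both factors of modulus `s`, with `0 / 0 = 0` the right value at `d = 0`.
  let s (k : Fin n → ℕ) : ℝ := √‖d k‖
  have norm_s (k) : ‖(s k : ℂ)‖ ^ 2 = ‖d k‖ := by simp [s]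
  have norm_div_s (k) : ‖d k / s k‖ ^ 2 = ‖d k‖ := by
    rw [norm_div, div_pow, norm_s, sq, mul_self_div_self]
  have s_mul_div (k) : d k / s k * s k = d k :=
    div_mul_cancel_of_imp fun h => by simpa [h] using (norm_s k).symm
  obtain ⟨A, hA, hAe⟩ := exists_isHilbertSchmidt_diagonal (hd.congr fun k => (norm_s k).symm)
  obtain ⟨B, hB, hBe⟩ := exists_isHilbertSchmidt_diagonal (hd.congr fun k => (norm_div_s k).symm)
  refine ⟨A, B, hA, hB, ext_eVec fun k => ?_⟩
  rw [hT, mul_apply_eq_comp, hBe, map_smul, hAe, smul_smul, s_mul_div]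

theorem summable_norm_prod_pi {R : Type*} [NormedCommRing R] {n : ℕ} {α : Fin n → Type*}
    {f : ∀ j, α j → R} (hf : ∀ j, Summable fun a => ‖f j a‖) :
    Summable fun k : ∀ j, α j => ‖∏ j, f j (k j)‖ := by
  induction n with
  | zero => exact .of_finite
  | succ n ih =>
    rw [← (Fin.consEquiv α).summable_iff]
    refine ((hf 0).mul_norm (ih fun j => hf j.succ)).congr fun k => ?_
    simp [Fin.consEquiv, Fin.prod_univ_succ]

theorem summable_norm_inv_pow_sum {𝕜 : Type*} [NormedField 𝕜] {q : 𝕜} (hq : 1 < ‖q‖) (n : ℕ) :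
    Summable fun k : Fin n → ℕ => ‖(q ^ ∑ j, k j)⁻¹‖ := by
  have hgeom : Summable fun m : ℕ => ‖q⁻¹ ^ m‖ := by
    simpa only [norm_pow, norm_inv] using
      summable_geometric_of_lt_one (by positivity) (inv_lt_one_of_one_lt₀ hq)
  exact (summable_norm_prod_pi fun _ : Fin n => hgeom).congr fun k => by
    rw [Finset.prod_pow_eq_pow_sum, inv_pow]

theorem evenSphere_Fredholm_module_one_summable_general (q : ℂ) (hq : 1 < ‖q‖) (n : ℕ)
    (Xp Xm : ℕ → (EllTwo n →L[ℂ] EllTwo n))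
    (hXp0 : ∀ k : Fin n → ℕ, Xp 0 (eVec n k) = (q ^ ∑ j, k j)⁻¹ • eVec n k)
    (hXm0 : ∀ k : Fin n → ℕ, Xm 0 (eVec n k) = (-(q ^ ∑ j, k j)⁻¹) • eVec n k)
    (hX : ∀ i : Fin n, Xp (i + 1) = Xm (i + 1)) :
    ∀ w ∈ StarAlgebra.adjoin ℂ {p : (EllTwo n →L[ℂ] EllTwo n) × (EllTwo n →L[ℂ] EllTwo n) |
        ∃ i : ℕ, i ≤ n ∧ p = (Xp i, Xm i)},
      IsTraceClass (w.1 - w.2) := by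
  intro w hw
  rw [← mem_traceClassIdeal]
  refine fst_sub_snd_mem_of_mem_starAdjoin
    (fun T hT => mem_traceClassIdeal.2 (mem_traceClassIdeal.1 hT).star) ?_ hw
  rintro _ ⟨_ | i, hi, rfl⟩
  · have hdiag (k : Fin n → ℕ) :
        (Xp 0 - Xm 0) (eVec n k) = (2 * (q ^ ∑ j, k j)⁻¹) • eVec n k := by
      rw [sub_apply, hXp0, hXm0]
      module
    refine mem_traceClassIdeal.2 (isTraceClass_of_summable_diagonal ?_ hdiag)
    simpa only [norm_mul] using (summable_norm_inv_pow_sum hq n).mul_left ‖(2 : ℂ)‖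
  · simpa only [hX ⟨i, hi⟩, sub_self] using TwoSidedIdeal.zero_mem _

/-- For the two irreducible representations `ψ^{(2n)}_±` of `S^{2n}_q`, the difference
`ψ₊(w) - ψ₋(w)` is trace class for every element `w` of the *-algebra generated by the
generators; equivalently, for every `w` in the star subalgebra of `B(H) × B(H)` generated
by the pairs `(ψ₊(xᵢ), ψ₋(xᵢ))`, the difference `w.1 - w.2` is trace class.  (This makes
`(ψ₊ ⊕ ψ₋, F = [[0,1],[1,0]], γ)` a `1`-summable even Fredholm module over
`A(S^{2n}_q)`.) -/
theorem evenSphere_Fredholm_module_one_summable (q : ℝ) (hq : 1 < |q|) (n : ℕ) (hn : 1 ≤ n)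
    (Xp Xm : ℕ → (lp (fun _ : Fin n → ℕ => ℂ) 2 →L[ℂ] lp (fun _ : Fin n → ℕ => ℂ) 2))
    (hXp0 : ∀ k : Fin n → ℕ,
      Xp 0 (eVec n k) = (((q ^ (∑ j, k j))⁻¹ : ℝ) : ℂ) • eVec n k)
    (hXm0 : ∀ k : Fin n → ℕ,
      Xm 0 (eVec n k) = ((-(q ^ (∑ j, k j))⁻¹ : ℝ) : ℂ) • eVec n k)
    (hXpi : ∀ i : Fin n, ∀ k : Fin n → ℕ,
      Xp ((i : ℕ) + 1) (eVec n k) =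
        (((Real.sqrt (1 - (q ^ (2 * k i))⁻¹) *
          (q ^ (∑ j ∈ Finset.univ.filter fun j => i < j, k j))⁻¹ : ℝ)) : ℂ) •
          eVec n (Function.update k i (k i - 1)))
    (hXmi : ∀ i : Fin n, ∀ k : Fin n → ℕ,
      Xm ((i : ℕ) + 1) (eVec n k) =
        (((Real.sqrt (1 - (q ^ (2 * k i))⁻¹) *
          (q ^ (∑ j ∈ Finset.univ.filter fun j => i < j, k j))⁻¹ : ℝ)) : ℂ) •
          eVec n (Function.update k i (k i - 1)))
    (hXpis : ∀ i : Fin n, ∀ k : Fin n → ℕ,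
      star (Xp ((i : ℕ) + 1)) (eVec n k) =
        (((Real.sqrt (1 - (q ^ (2 * (k i + 1)))⁻¹) *
          (q ^ (∑ j ∈ Finset.univ.filter fun j => i < j, k j))⁻¹ : ℝ)) : ℂ) •
          eVec n (Function.update k i (k i + 1)))
    (hXmis : ∀ i : Fin n, ∀ k : Fin n → ℕ,
      star (Xm ((i : ℕ) + 1)) (eVec n k) =
        (((Real.sqrt (1 - (q ^ (2 * (k i + 1)))⁻¹) *
          (q ^ (∑ j ∈ Finset.univ.filter fun j => i < j, k j))⁻¹ : ℝ)) : ℂ) •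
          eVec n (Function.update k i (k i + 1))) :
    ∀ w ∈ StarAlgebra.adjoin ℂ
        {p : (lp (fun _ : Fin n → ℕ => ℂ) 2 →L[ℂ] lp (fun _ : Fin n → ℕ => ℂ) 2) ×
             (lp (fun _ : Fin n → ℕ => ℂ) 2 →L[ℂ] lp (fun _ : Fin n → ℕ => ℂ) 2) |
          ∃ i : ℕ, i ≤ n ∧ p = (Xp i, Xm i)},
      IsTraceClass (w.1 - w.2) :=
  evenSphere_Fredholm_module_one_summable_general q (by simpa using hq) n Xp Xm
    (by simpa using hXp0) (by simpa using hXm0)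
    fun i => ext_eVec fun k => (hXpi i k).trans (hXmi i k).symm
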